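/- For every R > 0 one has λ₁(Γ_R) ≥ π²/2. Consequently, since R ↦ λ₁(Γ_R) is increasing on (0,∞), the right limit λ(0₊)=lim_{R→0⁺} λ₁(Γ_R) exists and satisfies λ(0₊) ≥ π²/2. -/

import Mathlib

/-!
The guide `Γ_R` is the disjoint union of the square `(-1,0)²` and the arms `[0,R) × (-1,0)` and
`(-1,0) × [0,R)`. On the square an admissible `u` vanishes at one end of every horizontal and
vertical slice, so the sharp one-dimensional Poincaré inequality gives `π²/4` for each of the two
partial derivatives, that is `∫ |∇u|² ≥ (π²/2) ∫ u²`. On the arms `u` vanishes at both ends of the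
transverse slices, and the transverse derivative alone gives `π²`.

Cutting `Γ_R'` down to `Γ_R` with `0 < R ≤ R'` removes pieces of arms on which the energy is at
least `π² ∫ u²`, whence `min (λ₁(Γ_R)) π² ≤ λ₁(Γ_R')`. Once `λ₁(Γ_R₀) < π²` for a single `R₀ > 0`,
the map `R ↦ λ₁(Γ_R)` is therefore monotone on `(0, R₀]` and has a limit at `0⁺`. Such an `R₀` is
provided by `w - w⁵`, where `w (x, y) = cos (πx/2) cos (πy/2)` on the square, extended by constants
across the sides `x = 0` and `y = 0`: its Rayleigh quotient on the square is below `π²`, and the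
contribution of the arms tends to `0` with `R`.
-/

noncomputable section
open MeasureTheory Set Real

/-- The interval `I = (-1,0)`. -/
def II : Set ℝ := Set.Ioo (-1) 0

/-- The broken guide `Γ = {x ∈ ℝ² : -1 < min(x₁,x₂) < 0}`. -/
def Gam : Set (ℝ × ℝ) := {p | -1 < min p.1 p.2 ∧ min p.1 p.2 < 0}

/-- The box `□_L = {x : max(|x₁+1|,|x₂+1|) < L}`. -/
def Box (L : ℝ) : Set (ℝ × ℝ) := {p | |p.1 + 1| < L ∧ |p.2 + 1| < L}

/-- The finite guide `Γ_R = Γ ∩ □_{R+1}`. -/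
def GamR (R : ℝ) : Set (ℝ × ℝ) := Gam ∩ Box (R + 1)

/-- The Neumann part `Σ_R = ∂Γ_R ∩ ∂□_{R+1}` of the boundary. -/
def Sig (R : ℝ) : Set (ℝ × ℝ) := frontier (GamR R) ∩ frontier (Box (R + 1))

/-- The Dirichlet part `∂Γ_R ∖ Σ_R` of the boundary. -/
def DirB (R : ℝ) : Set (ℝ × ℝ) := frontier (GamR R) \ Sig R

/-- Squared gradient `|∇u|² = (∂₁u)² + (∂₂u)²`. -/
def gradSq2 (u : ℝ × ℝ → ℝ) (p : ℝ × ℝ) : ℝ :=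
  (fderiv ℝ u p (1, 0)) ^ 2 + (fderiv ℝ u p (0, 1)) ^ 2

/-- Admissible functions for the mixed problem on `Γ_R`: `C¹` up to the boundary
(modelled by a globally `C¹` extension) vanishing on the Dirichlet part. -/
def AdmR (R : ℝ) (u : ℝ × ℝ → ℝ) : Prop :=
  ContDiff ℝ 1 u ∧ ∀ p ∈ DirB R, u p = 0

/-- First Rayleigh quotient `λ₁(Γ_R)` of the mixed Dirichlet–Neumann Laplacian on `Γ_R`. -/
def lamR (R : ℝ) : ℝ :=
  sInf {r | ∃ u : ℝ × ℝ → ℝ, AdmR R u ∧ (∫ p in GamR R, (u p) ^ 2) ≠ 0 ∧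
    r = (∫ p in GamR R, gradSq2 u p) / ∫ p in GamR R, (u p) ^ 2}

/-- First Rayleigh quotient `λ₁(Γ)` of the Dirichlet Laplacian on the broken guide `Γ`. -/
def lamG : ℝ :=
  sInf {r | ∃ u : ℝ × ℝ → ℝ, ContDiff ℝ 1 u ∧ HasCompactSupport u ∧ tsupport u ⊆ Gam ∧
    (∫ p in Gam, (u p) ^ 2) ≠ 0 ∧
    r = (∫ p in Gam, gradSq2 u p) / ∫ p in Gam, (u p) ^ 2}

/-- `ω = √(π² − λ₁(Γ))`. -/
def omega : ℝ := Real.sqrt (π ^ 2 - lamG)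

open Filter Topology

/-! ### Sharp Poincaré inequalities on an interval -/

section Interval

variable {f f' : ℝ → ℝ} {a b k m : ℝ}

-- The coefficient of `f x ^ 2` is minus the logarithmic derivative of `φ x = cos (k * (x - m))`, so
-- the completed square vanishes exactly for the multiples of `φ`.
theorem hasDerivAt_mul_tan_mul_sq {x y' : ℝ} (hf : HasDerivAt f y' x)
    (hcos : cos (k * (x - m)) ≠ 0) :
    HasDerivAt (fun x => k * tan (k * (x - m)) * f x ^ 2)
      ((y' + k * tan (k * (x - m)) * f x) ^ 2 - (y' ^ 2 - k ^ 2 * f x ^ 2)) x := by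
  have hlin : HasDerivAt (fun x => k * (x - m)) k x := by
    simpa using ((hasDerivAt_id x).sub_const m).const_mul k
  have hsec : 1 / cos (k * (x - m)) ^ 2 = 1 + tan (k * (x - m)) ^ 2 := by
    rw [← inv_one_add_tan_sq hcos, one_div, inv_inv]
  refine ((((hasDerivAt_tan hcos).comp x hlin).const_mul k).mul (hf.pow 2)).congr_deriv ?_
  simp only [Function.comp_apply, Pi.pow_apply, hsec]
  push_cast
  ring

theorem sq_mul_integral_sq_le_add_tan (hab : a ≤ b) (hf : ∀ x ∈ Icc a b, HasDerivAt f (f' x) x)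
    (hf' : ContinuousOn f' (Icc a b)) (hcos : ∀ x ∈ Icc a b, cos (k * (x - m)) ≠ 0) :
    k ^ 2 * ∫ x in a..b, f x ^ 2 ≤ (∫ x in a..b, f' x ^ 2)
      + (k * tan (k * (b - m)) * f b ^ 2 - k * tan (k * (a - m)) * f a ^ 2) := by
  have hfc : ContinuousOn f (Icc a b) := fun x hx => (hf x hx).continuousAt.continuousWithinAt
  have htan : ContinuousOn (fun x => tan (k * (x - m))) (Icc a b) :=
    continuousOn_tan.comp (by fun_prop) hcos
  rw [← uIcc_of_le hab] at hf hf' hcos hfc htan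
  have hsquare : IntervalIntegrable (fun x => (f' x + k * tan (k * (x - m)) * f x) ^ 2)
      volume a b := ContinuousOn.intervalIntegrable (by fun_prop)
  have hf'sq : IntervalIntegrable (fun x => f' x ^ 2) volume a b := (hf'.pow 2).intervalIntegrable
  have hfsq : IntervalIntegrable (fun x => k ^ 2 * f x ^ 2) volume a b :=
    ((hfc.pow 2).const_mul _).intervalIntegrable
  have hftc := intervalIntegral.integral_eq_sub_of_hasDerivAt
    (fun x hx => hasDerivAt_mul_tan_mul_sq (hf x hx) (hcos x hx))
    (hsquare.sub (hf'sq.sub hfsq))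
  rw [intervalIntegral.integral_sub hsquare (hf'sq.sub hfsq),
    intervalIntegral.integral_sub hf'sq hfsq, intervalIntegral.integral_const_mul] at hftc
  have hnonneg : 0 ≤ ∫ x in a..b, (f' x + k * tan (k * (x - m)) * f x) ^ 2 :=
    intervalIntegral.integral_nonneg hab fun _ _ => sq_nonneg _
  linarith

theorem sq_mul_le_of_forall_lt {K A B : ℝ} (hK : 0 < K)
    (h : ∀ k, 0 < k → k < K → k ^ 2 * A ≤ B) : K ^ 2 * A ≤ B := by
  have hlim : Tendsto (fun k : ℝ => k ^ 2 * A) (𝓝[<] K) (𝓝 (K ^ 2 * A)) :=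
    (Continuous.tendsto (by fun_prop) K).mono_left nhdsWithin_le_nhds
  refine le_of_tendsto hlim ?_
  filter_upwards [Ioo_mem_nhdsLT hK] with k hk using h k hk.1 hk.2

theorem poincare_of_left_eq_zero (hab : a < b) (hf : ∀ x ∈ Icc a b, HasDerivAt f (f' x) x)
    (hf' : ContinuousOn f' (Icc a b)) (ha : f a = 0) :
    (π / (2 * (b - a))) ^ 2 * ∫ x in a..b, f x ^ 2 ≤ ∫ x in a..b, f' x ^ 2 := by
  have hpos : 0 < 2 * (b - a) := by linarith
  refine sq_mul_le_of_forall_lt (by positivity) fun k hk hkK => ?_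
  have hkπ : k * (2 * (b - a)) < π := (lt_div_iff₀ hpos).1 hkK
  have hcos : ∀ x ∈ Icc a b, cos (k * (x - b)) ≠ 0 := fun x hx =>
    (cos_pos_of_mem_Ioo ⟨by nlinarith [hx.1], by nlinarith [hx.2, pi_pos]⟩).ne'
  simpa [ha] using sq_mul_integral_sq_le_add_tan hab.le hf hf' hcos

theorem poincare_of_endpoints_eq_zero (hab : a < b) (hf : ∀ x ∈ Icc a b, HasDerivAt f (f' x) x)
    (hf' : ContinuousOn f' (Icc a b)) (ha : f a = 0) (hb : f b = 0) :
    (π / (b - a)) ^ 2 * ∫ x in a..b, f x ^ 2 ≤ ∫ x in a..b, f' x ^ 2 := by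
  have hpos : 0 < b - a := sub_pos.2 hab
  refine sq_mul_le_of_forall_lt (by positivity) fun k hk hkK => ?_
  have hkπ : k * (b - a) < π := (lt_div_iff₀ hpos).1 hkK
  have hcos : ∀ x ∈ Icc a b, cos (k * (x - (a + b) / 2)) ≠ 0 := fun x hx =>
    (cos_pos_of_mem_Ioo ⟨by nlinarith [hx.1], by nlinarith [hx.2]⟩).ne'
  simpa [ha, hb] using sq_mul_integral_sq_le_add_tan hab.le hf hf' hcos

end Interval

/-! ### Integrals over products -/

section Product

theorem integrableOn_of_isBounded {X E : Type*} [MetricSpace X] [ProperSpace X]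
    [MeasurableSpace X] [OpensMeasurableSpace X] {μ : Measure X} [IsFiniteMeasureOnCompacts μ]
    [NormedAddCommGroup E] {g : X → E} (hg : Continuous g) {s : Set X}
    (hs : Bornology.IsBounded s) : IntegrableOn g s μ :=
  (hg.continuousOn.integrableOn_compact hs.isCompact_closure).mono_set subset_closure

theorem memLp_two_of_isBounded {X : Type*} [MetricSpace X] [ProperSpace X]
    [MeasurableSpace X] [OpensMeasurableSpace X] {μ : Measure X} [IsFiniteMeasureOnCompacts μ]
    {g : X → ℝ} (hg : Continuous g) {s : Set X} (hs : Bornology.IsBounded s) :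
    MemLp g 2 (μ.restrict s) :=
  (memLp_two_iff_integrable_sq hg.aestronglyMeasurable).2
    (integrableOn_of_isBounded (hg.pow 2) hs)

variable {α β : Type*} [MeasurableSpace α] [MeasurableSpace β] {μ : Measure α} {ν : Measure β}
  [SFinite μ] [SFinite ν]

theorem setIntegral_prod_mono_of_slices {g h : α × β → ℝ} {s : Set α} {t : Set β}
    (hs : MeasurableSet s) (hg : IntegrableOn g (s ×ˢ t) (μ.prod ν))
    (hh : IntegrableOn h (s ×ˢ t) (μ.prod ν))
    (hle : ∀ x ∈ s, ∫ y in t, g (x, y) ∂ν ≤ ∫ y in t, h (x, y) ∂ν) :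
    ∫ p in s ×ˢ t, g p ∂μ.prod ν ≤ ∫ p in s ×ˢ t, h p ∂μ.prod ν := by
  rw [setIntegral_prod g hg, setIntegral_prod h hh]
  rw [IntegrableOn, ← Measure.prod_restrict] at hg hh
  exact setIntegral_mono_on hg.integral_prod_left hh.integral_prod_left hs hle

theorem integral_prod_mul_sub_mul_sq {a c : α → ℝ} {b d : β → ℝ} (ha : MemLp a 2 μ)
    (hb : MemLp b 2 ν) (hc : MemLp c 2 μ) (hd : MemLp d 2 ν) :
    ∫ p, (a p.1 * b p.2 - c p.1 * d p.2) ^ 2 ∂μ.prod ν =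
      (∫ x, a x ^ 2 ∂μ) * (∫ y, b y ^ 2 ∂ν) - 2 * ((∫ x, a x * c x ∂μ) * ∫ y, b y * d y ∂ν)
        + (∫ x, c x ^ 2 ∂μ) * (∫ y, d y ^ 2 ∂ν) := by
  have hab := ha.integrable_sq.mul_prod hb.integrable_sq
  have hcross := ((ha.integrable_mul hc).mul_prod (hb.integrable_mul hd)).const_mul 2
  have hcd := hc.integrable_sq.mul_prod hd.integrable_sq
  simp only [Pi.mul_apply] at hcross
  have hdiff : Integrable (fun p : α × β =>
      a p.1 ^ 2 * b p.2 ^ 2 - 2 * (a p.1 * c p.1 * (b p.2 * d p.2))) (μ.prod ν) := hab.sub hcross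
  have hexpand (p : α × β) : (a p.1 * b p.2 - c p.1 * d p.2) ^ 2 =
      a p.1 ^ 2 * b p.2 ^ 2 - 2 * (a p.1 * c p.1 * (b p.2 * d p.2)) + c p.1 ^ 2 * d p.2 ^ 2 := by
    ring
  simp_rw [hexpand]
  rw [integral_add hdiff hcd, integral_sub hab hcross, integral_const_mul,
    integral_prod_mul (fun x => a x ^ 2) (fun y => b y ^ 2),
    integral_prod_mul (fun x => a x * c x) (fun y => b y * d y),
    integral_prod_mul (fun x => c x ^ 2) (fun y => d y ^ 2)]

theorem setIntegral_volume_prod_swap {α β : Type*} [MeasureSpace α] [MeasureSpace β]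
    [SFinite (volume : Measure α)] [SFinite (volume : Measure β)] (g : α × β → ℝ) (s : Set α)
    (t : Set β) : ∫ p in t ×ˢ s, g p.swap = ∫ p in s ×ˢ t, g p :=
  setIntegral_prod_swap s t g

end Product

/-! ### Partial derivatives and reflection in the diagonal -/

section PartialDerivatives

theorem hasDerivAt_comp_prodMk_right {E F : Type*} [NormedAddCommGroup E] [NormedSpace ℝ E]
    [NormedAddCommGroup F] [NormedSpace ℝ F] {u : E × ℝ → F} {x : E} {y : ℝ}
    (hu : DifferentiableAt ℝ u (x, y)) :
    HasDerivAt (fun y => u (x, y)) (fderiv ℝ u (x, y) (0, 1)) y :=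
  hu.hasFDerivAt.comp_hasDerivAt y ((hasDerivAt_const y x).prodMk (hasDerivAt_id y))

theorem fderiv_comp_swap {E F G : Type*} [NormedAddCommGroup E] [NormedSpace ℝ E]
    [NormedAddCommGroup F] [NormedSpace ℝ F] [NormedAddCommGroup G] [NormedSpace ℝ G]
    (u : E × F → G) (p v : F × E) :
    fderiv ℝ (u ∘ Prod.swap) p v = fderiv ℝ u p.swap v.swap :=
  DFunLike.congr_fun ((ContinuousLinearEquiv.prodComm ℝ F E).comp_right_fderiv (f := u) (x := p)) v

variable {u : ℝ × ℝ → ℝ}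

theorem gradSq2_comp_swap (u : ℝ × ℝ → ℝ) (p : ℝ × ℝ) :
    gradSq2 (u ∘ Prod.swap) p = gradSq2 u p.swap := by
  simp only [gradSq2, fderiv_comp_swap, Prod.swap_prod_mk, add_comm]

theorem gradSq2_nonneg (u : ℝ × ℝ → ℝ) (p : ℝ × ℝ) : 0 ≤ gradSq2 u p := by
  unfold gradSq2
  positivity

theorem continuous_fderiv_sq (hu : ContDiff ℝ 1 u) (v : ℝ × ℝ) :
    Continuous fun p => fderiv ℝ u p v ^ 2 :=
  ((hu.continuous_fderiv one_ne_zero).clm_apply continuous_const).pow 2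

theorem continuous_gradSq2 (hu : ContDiff ℝ 1 u) : Continuous (gradSq2 u) :=
  (continuous_fderiv_sq hu _).add (continuous_fderiv_sq hu _)

theorem setIntegral_gradSq2_prod_self (hu : ContDiff ℝ 1 u) {s : Set ℝ}
    (hs : Bornology.IsBounded s) :
    ∫ p in s ×ˢ s, gradSq2 u p = (∫ p in s ×ˢ s, fderiv ℝ (u ∘ Prod.swap) p (0, 1) ^ 2)
      + ∫ p in s ×ˢ s, fderiv ℝ u p (0, 1) ^ 2 := by
  have hint (v : ℝ × ℝ) : IntegrableOn (fun p => fderiv ℝ u p v ^ 2) (s ×ˢ s) :=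
    integrableOn_of_isBounded (continuous_fderiv_sq hu v) (hs.prod hs)
  simp only [gradSq2, fderiv_comp_swap, Prod.swap_prod_mk]
  rw [integral_add (hint _) (hint _),
    setIntegral_volume_prod_swap (fun p => fderiv ℝ u p (1, 0) ^ 2)]

end PartialDerivatives

/-! ### Geometry of the finite guide -/

section Geometry

variable {R R' : ℝ} {p : ℝ × ℝ}

theorem isBounded_II : Bornology.IsBounded II := Metric.isBounded_Ioo (-1) 0

theorem measurableSet_II : MeasurableSet II := measurableSet_Ioo

theorem intervalIntegral_neg_one_zero (g : ℝ → ℝ) : ∫ x in (-1)..0, g x = ∫ x in II, g x := by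
  rw [intervalIntegral.integral_of_le (by norm_num), integral_Ioc_eq_integral_Ioo, II]

theorem mem_GamR_iff :
    p ∈ GamR R ↔ -1 < p.1 ∧ -1 < p.2 ∧ p.1 < R ∧ p.2 < R ∧ (p.1 < 0 ∨ p.2 < 0) := by
  simp only [GamR, Gam, Box, mem_inter_iff, mem_ofPred_eq, lt_min_iff, min_lt_iff, abs_lt]
  grind

theorem isOpen_Gam : IsOpen Gam :=
  isOpen_Ioo.preimage (continuous_fst.min continuous_snd)

theorem isOpen_Box (L : ℝ) : IsOpen (Box L) := by
  have hfst : Continuous fun p : ℝ × ℝ => |p.1 + 1| := by fun_prop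
  have hsnd : Continuous fun p : ℝ × ℝ => |p.2 + 1| := by fun_prop
  exact (isOpen_lt hfst continuous_const).inter (isOpen_lt hsnd continuous_const)

theorem isOpen_GamR (R : ℝ) : IsOpen (GamR R) := isOpen_Gam.inter (isOpen_Box _)

theorem isBounded_GamR (R : ℝ) : Bornology.IsBounded (GamR R) :=
  ((Metric.isBounded_Ioo (-1) R).prod (Metric.isBounded_Ioo (-1) R)).subset fun p hp => by
    obtain ⟨h₁, h₂, h₁R, h₂R, -⟩ := mem_GamR_iff.1 hp
    exact ⟨⟨h₁, h₁R⟩, h₂, h₂R⟩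

theorem GamR_zero : GamR 0 = II ×ˢ II := by
  ext p
  simp only [mem_GamR_iff, II, mem_prod, mem_Ioo]
  tauto

theorem GamR_mono (h : R ≤ R') : GamR R ⊆ GamR R' := fun p hp => by
  rw [mem_GamR_iff] at hp ⊢
  grind

theorem GamR_eq_union_arms (hR : 0 ≤ R) (h : R ≤ R') :
    GamR R' = GamR R ∪ (Ico R R' ×ˢ II ∪ II ×ˢ Ico R R') := by
  ext p
  simp only [mem_GamR_iff, II, mem_union, mem_prod, mem_Ioo, mem_Ico]
  grind

theorem setIntegral_GamR_eq_add_arms {g : ℝ × ℝ → ℝ} (hg : Continuous g) (hR : 0 ≤ R)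
    (h : R ≤ R') :
    ∫ p in GamR R', g p = (∫ p in GamR R, g p)
      + ((∫ p in Ico R R' ×ˢ II, g p) + ∫ p in II ×ˢ Ico R R', g p) := by
  have hIco := Metric.isBounded_Ico R R'
  have hII := isBounded_II
  have hmIco : MeasurableSet (Ico R R') := measurableSet_Ico
  have hmII := measurableSet_II
  have hguide : Disjoint (GamR R) (Ico R R' ×ˢ II ∪ II ×ˢ Ico R R') := by
    simp only [Set.disjoint_left, mem_GamR_iff, mem_union, mem_prod, mem_Ico]
    grind
  have harms : Disjoint (Ico R R' ×ˢ II) (II ×ˢ Ico R R') := by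
    simp only [Set.disjoint_left, II, mem_prod, mem_Ico, mem_Ioo]
    grind
  rw [GamR_eq_union_arms hR h,
    setIntegral_union hguide ((hmIco.prod hmII).union (hmII.prod hmIco))
      (integrableOn_of_isBounded hg (isBounded_GamR R))
      (integrableOn_of_isBounded hg ((hIco.prod hII).union (hII.prod hIco))),
    setIntegral_union harms (hmII.prod hmIco) (integrableOn_of_isBounded hg (hIco.prod hII))
      (integrableOn_of_isBounded hg (hII.prod hIco))]

theorem mem_DirB_iff :
    p ∈ DirB R ↔ p ∈ closure (GamR R) ∧ p ∈ Box (R + 1) ∧ p ∉ Gam := by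
  have hsub : p ∈ closure (GamR R) → p ∈ closure (Box (R + 1)) :=
    fun hp => closure_mono inter_subset_right hp
  rw [DirB, Sig, (isOpen_GamR R).frontier_eq, (isOpen_Box _).frontier_eq]
  simp only [GamR, Set.mem_sdiff, mem_inter_iff] at hsub ⊢
  tauto

theorem min_eq_of_mem_DirB (hp : p ∈ DirB R) :
    min p.1 p.2 = -1 ∨ min p.1 p.2 = 0 := by
  obtain ⟨hcl, -, hG⟩ := mem_DirB_iff.1 hp
  have hmin : min p.1 p.2 ∈ Icc (-1 : ℝ) 0 := by
    have hclosed : IsClosed ((fun q : ℝ × ℝ => min q.1 q.2) ⁻¹' Icc (-1) 0) :=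
      isClosed_Icc.preimage (by fun_prop)
    have hsub : GamR R ⊆ (fun q : ℝ × ℝ => min q.1 q.2) ⁻¹' Icc (-1) 0 :=
      fun q hq => Ioo_subset_Icc_self hq.1
    exact closure_minimal hsub hclosed hcl
  by_contra! hne
  exact hG ⟨hmin.1.lt_of_ne' hne.1, hmin.2.lt_of_ne hne.2⟩

theorem DirB_mono (h : R ≤ R') : DirB R ⊆ DirB R' := fun p hp => by
  obtain ⟨hcl, hbox, hG⟩ := mem_DirB_iff.1 hp
  exact mem_DirB_iff.2 ⟨closure_mono (GamR_mono h) hcl,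
    ⟨hbox.1.trans_le (by gcongr), hbox.2.trans_le (by gcongr)⟩, hG⟩

theorem swap_mem_DirB (hp : p ∈ DirB R) : p.swap ∈ DirB R := by
  obtain ⟨hcl, hbox, hG⟩ := mem_DirB_iff.1 hp
  refine mem_DirB_iff.2 ⟨map_mem_closure continuous_swap hcl fun q hq => ?_, hbox.symm, ?_⟩
  · simp only [mem_GamR_iff, Prod.fst_swap, Prod.snd_swap] at hq ⊢
    tauto
  · rwa [Gam, mem_ofPred_eq, Prod.fst_swap, Prod.snd_swap, min_comm]

theorem mk_mem_DirB (hR : 0 < R) {x y : ℝ} (hx : x ∈ Ioo (-1) R) (hy : y ∈ Icc (-1) 0)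
    (hG : (x, y) ∉ Gam) : (x, y) ∈ DirB R := by
  refine mem_DirB_iff.2 ⟨?_, ?_, hG⟩
  · have hslice : MapsTo (Prod.mk x) II (GamR R) := fun t ht =>
      mem_GamR_iff.2 ⟨hx.1, ht.1, hx.2, ht.2.trans hR, Or.inr ht.2⟩
    rw [← closure_Ioo (by norm_num)] at hy
    exact map_mem_closure (by fun_prop) hy hslice
  · simp only [mem_Ioo, mem_Icc] at hx hy
    simp only [Box, mem_ofPred_eq, abs_lt]
    grind

theorem tendsto_setIntegral_arm {g : ℝ × ℝ → ℝ} (hg : Continuous g) :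
    Tendsto (fun R => ∫ p in Ico 0 R ×ˢ II, g p) (𝓝[>] 0) (𝓝 0) := by
  obtain ⟨C, hC⟩ := (isCompact_Icc.prod isCompact_Icc :
    IsCompact (Icc (0 : ℝ) 1 ×ˢ Icc (-1 : ℝ) 0)).exists_bound_of_continuousOn hg.continuousOn
  have hbound : ∀ᶠ R in 𝓝[>] (0 : ℝ), ‖∫ p in Ico 0 R ×ˢ II, g p‖ ≤ C * R := by
    filter_upwards [Ioo_mem_nhdsGT one_pos] with R hR
    have hvol : volume (Ico 0 R ×ˢ II) = ENNReal.ofReal R := by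
      simp [Measure.volume_eq_prod, Measure.prod_prod, II]
    have hle := norm_setIntegral_le_of_norm_le_const (hvol.trans_lt ENNReal.ofReal_lt_top)
      fun p hp => hC p (prod_mono (Ico_subset_Icc_self.trans (Icc_subset_Icc_right hR.2.le))
        Ioo_subset_Icc_self hp)
    rwa [measureReal_def, hvol, ENNReal.toReal_ofReal hR.1.le] at hle
  have hzero : Tendsto (fun R => C * R) (𝓝[>] 0) (𝓝 0) :=
    (Continuous.tendsto' (by fun_prop) 0 0 (mul_zero C)).mono_left nhdsWithin_le_nhds
  exact squeeze_zero_norm' hbound hzero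

theorem tendsto_setIntegral_GamR {g : ℝ × ℝ → ℝ} (hg : Continuous g) :
    Tendsto (fun R => ∫ p in GamR R, g p) (𝓝[>] 0) (𝓝 (∫ p in GamR 0, g p)) := by
  have harms := ((tendsto_setIntegral_arm hg).add
    (tendsto_setIntegral_arm (hg.comp continuous_swap))).const_add (∫ p in GamR 0, g p)
  rw [add_zero, add_zero] at harms
  refine harms.congr' ?_
  filter_upwards [self_mem_nhdsWithin] with R hR
  rw [setIntegral_GamR_eq_add_arms hg le_rfl (le_of_lt hR), ← setIntegral_volume_prod_swap g II]
  rfl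

end Geometry

/-! ### A trial function -/

section Trial

theorem hasDerivAt_comp_min {F : Type*} [NormedAddCommGroup F] [NormedSpace ℝ F] {f f' : ℝ → F}
    {a : ℝ} (hf : ∀ x, HasDerivAt f (f' x) x) (ha : f' a = 0) (x : ℝ) :
    HasDerivAt (fun x => f (min x a)) (f' (min x a)) x := by
  rcases lt_trichotomy x a with hx | rfl | hx
  · rw [min_eq_left hx.le]
    refine (hf x).congr_of_eventuallyEq ?_
    filter_upwards [Iio_mem_nhds hx] with y hy
    rw [min_eq_left hy.le]
  · rw [min_self, ← hasDerivWithinAt_univ, ← Iic_union_Ici (a := x)]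
    refine ((hf x).hasDerivWithinAt.congr (fun y hy => ?_) ?_).union
      (ha ▸ (hasDerivWithinAt_const x _ (f x)).congr (fun y hy => ?_) ?_)
    · rw [min_eq_left hy]
    · rw [min_self]
    · rw [min_eq_right hy]
    · rw [min_self]
  · rw [min_eq_right hx.le, ha]
    refine (hasDerivAt_const x (f a)).congr_of_eventuallyEq ?_
    filter_upwards [Ioi_mem_nhds hx] with y hy
    rw [min_eq_right hy.le]

/-- The first eigenfunction of `-d²/dx²` on `(-1,0)` with a Dirichlet end at `-1` and a Neumann
end at `0`, extended to the right by its value `1` at `0`. -/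
def cosExt (x : ℝ) : ℝ := cos (π / 2 * min x 0)

/-- Up to the factor `-π/2`, the derivative of `cosExt`. -/
def sinExt (x : ℝ) : ℝ := sin (π / 2 * min x 0)

theorem hasDerivAt_cosExt (x : ℝ) : HasDerivAt cosExt (-(π / 2) * sinExt x) x := by
  have hcos (x : ℝ) : HasDerivAt (fun x => cos (π / 2 * x)) (-(π / 2) * sin (π / 2 * x)) x := by
    refine (((hasDerivAt_id x).const_mul (π / 2)).cos).congr_deriv ?_
    simp only [id_eq]
    ring
  exact hasDerivAt_comp_min hcos (by simp) x

theorem continuous_cosExt : Continuous cosExt := by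
  unfold cosExt
  fun_prop

theorem continuous_sinExt : Continuous sinExt := by
  unfold sinExt
  fun_prop

theorem contDiff_cosExt : ContDiff ℝ 1 cosExt :=
  contDiff_one_iff_deriv.2 ⟨fun x => (hasDerivAt_cosExt x).differentiableAt, by
    rw [deriv_eq hasDerivAt_cosExt]
    exact continuous_sinExt.const_mul _⟩

theorem cosExt_neg_one : cosExt (-1) = 0 := by simp [cosExt]

theorem cosExt_of_nonneg {x : ℝ} (hx : 0 ≤ x) : cosExt x = 1 := by simp [cosExt, hx]

theorem sinExt_sq (x : ℝ) : sinExt x ^ 2 = 1 - cosExt x ^ 2 := sin_sq _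

theorem integral_cosExt_pow (n : ℕ) :
    ∫ x in II, cosExt x ^ n = (π / 2)⁻¹ * ∫ x in (-(π / 2))..0, cos x ^ n := by
  calc ∫ x in II, cosExt x ^ n
      = ∫ x in II, cos (π / 2 * x) ^ n :=
        setIntegral_congr_fun measurableSet_II fun x hx => by
          simp only [cosExt, min_eq_left hx.2.le]
    _ = ∫ x in (-1)..0, cos (π / 2 * x) ^ n := (intervalIntegral_neg_one_zero _).symm
    _ = (π / 2)⁻¹ * ∫ x in (-(π / 2))..0, cos x ^ n := by
        rw [intervalIntegral.integral_comp_mul_left (fun x => cos x ^ n) (by positivity),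
          mul_neg_one, mul_zero, smul_eq_mul]

theorem integral_cosExt_pow_add_two (n : ℕ) :
    ∫ x in II, cosExt x ^ (n + 2) = (n + 1) / (n + 2) * ∫ x in II, cosExt x ^ n := by
  simp only [integral_cosExt_pow, integral_cos_pow, cos_neg, cos_pi_div_two, sin_zero]
  ring

theorem integral_cosExt_pow_mul_sinExt_sq (n : ℕ) :
    ∫ x in II, cosExt x ^ n * sinExt x ^ 2 = (∫ x in II, cosExt x ^ (n + 2)) / (n + 1) := by
  have hint (m : ℕ) : IntegrableOn (fun x => cosExt x ^ m) II :=
    integrableOn_of_isBounded (continuous_cosExt.pow m) isBounded_II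
  have hexpand (x : ℝ) : cosExt x ^ n * sinExt x ^ 2 = cosExt x ^ n - cosExt x ^ (n + 2) := by
    rw [sinExt_sq]
    ring
  simp_rw [hexpand]
  rw [integral_sub (hint n) (hint (n + 2)), integral_cosExt_pow_add_two]
  field

theorem integral_cosExt_sq : ∫ x in II, cosExt x ^ 2 = 1 / 2 := by
  have h := integral_cosExt_pow_add_two 0
  simpa [II] using h

theorem integral_cosExt_pow_six : ∫ x in II, cosExt x ^ 6 = 5 / 16 := by
  rw [integral_cosExt_pow_add_two 4, integral_cosExt_pow_add_two 2, integral_cosExt_sq]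
  norm_num

theorem integral_cosExt_pow_ten : ∫ x in II, cosExt x ^ 10 = 63 / 256 := by
  rw [integral_cosExt_pow_add_two 8, integral_cosExt_pow_add_two 6, integral_cosExt_pow_six]
  norm_num

/-- With `w = cosExt ⊗ cosExt`, the function `w - w⁵` vanishes where `w ∈ {0, 1}`, hence on the
Dirichlet part of every `Γ_R`; `5` is the least exponent for which its Rayleigh quotient on the
square is below `π²`. -/
def trial (p : ℝ × ℝ) : ℝ := cosExt p.1 * cosExt p.2 - cosExt p.1 ^ 5 * cosExt p.2 ^ 5

theorem trial_comp_swap : trial ∘ Prod.swap = trial := by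
  ext p
  simp only [trial, Function.comp_apply, Prod.fst_swap, Prod.snd_swap]
  ring

theorem contDiff_trial : ContDiff ℝ 1 trial := by
  have hfst := contDiff_cosExt.comp (contDiff_fst (E := ℝ) (F := ℝ))
  have hsnd := contDiff_cosExt.comp (contDiff_snd (E := ℝ) (F := ℝ))
  exact (hfst.mul hsnd).sub ((hfst.pow 5).mul (hsnd.pow 5))

theorem admR_trial (R : ℝ) : AdmR R trial := by
  refine ⟨contDiff_trial, fun p hp => ?_⟩
  rcases min_eq_of_mem_DirB hp with h | h
  · rcases min_choice p.1 p.2 with h' | h' <;> rw [h'] at h <;> simp [trial, h, cosExt_neg_one]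
  · have hle := le_min_iff.1 h.ge
    simp [trial, cosExt_of_nonneg hle.1, cosExt_of_nonneg hle.2]

theorem fderiv_trial_snd (p : ℝ × ℝ) :
    fderiv ℝ trial p (0, 1) = cosExt p.1 * (-(π / 2) * sinExt p.2)
      - cosExt p.1 ^ 5 * (-(5 * π / 2) * (cosExt p.2 ^ 4 * sinExt p.2)) := by
  have hcos := hasDerivAt_cosExt p.2
  have hpartial := hasDerivAt_comp_prodMk_right (x := p.1) (y := p.2)
    (contDiff_trial.differentiable one_ne_zero _)
  refine (hpartial.unique ((hcos.const_mul (cosExt p.1)).sub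
    ((hcos.pow 5).const_mul (cosExt p.1 ^ 5)))).trans ?_
  push_cast
  ring

theorem integral_square_mul_sub_mul_sq {a b c d : ℝ → ℝ} (ha : Continuous a)
    (hb : Continuous b) (hc : Continuous c) (hd : Continuous d) :
    ∫ p in II ×ˢ II, (a p.1 * b p.2 - c p.1 * d p.2) ^ 2 =
      (∫ x in II, a x ^ 2) * (∫ y in II, b y ^ 2)
        - 2 * ((∫ x in II, a x * c x) * ∫ y in II, b y * d y)
        + (∫ x in II, c x ^ 2) * (∫ y in II, d y ^ 2) := by
  have hmem {g : ℝ → ℝ} (hg : Continuous g) : MemLp g 2 (volume.restrict II) :=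
    memLp_two_of_isBounded hg isBounded_II
  rw [Measure.volume_eq_prod, ← Measure.prod_restrict,
    integral_prod_mul_sub_mul_sq (hmem ha) (hmem hb) (hmem hc) (hmem hd)]

theorem integral_square_trial_sq : ∫ p in II ×ˢ II, trial p ^ 2 = 7553 / 65536 := by
  have hcos := continuous_cosExt
  have hcos5 : Continuous fun x => cosExt x ^ 5 := hcos.pow 5
  unfold trial
  rw [integral_square_mul_sub_mul_sq hcos hcos hcos5 hcos5]
  simp only [← pow_succ', ← pow_mul, Nat.reduceAdd, Nat.reduceMul, integral_cosExt_sq,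
    integral_cosExt_pow_six, integral_cosExt_pow_ten]
  norm_num

theorem integral_square_fderiv_trial_snd_sq :
    ∫ p in II ×ˢ II, fderiv ℝ trial p (0, 1) ^ 2 = 14609 / 65536 * (π ^ 2 / 4) := by
  have hcos := continuous_cosExt
  have hcos5 : Continuous fun x => cosExt x ^ 5 := hcos.pow 5
  have hdcos : Continuous fun y => -(π / 2) * sinExt y := continuous_sinExt.const_mul _
  have hdcos5 : Continuous fun y => -(5 * π / 2) * (cosExt y ^ 4 * sinExt y) :=
    ((hcos.pow 4).mul continuous_sinExt).const_mul _
  have hsin_sq : ∫ y in II, (-(π / 2) * sinExt y) ^ 2 = π ^ 2 / 4 * (1 / 2) := by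
    have h := integral_cosExt_pow_mul_sinExt_sq 0
    simp only [pow_zero, one_mul, zero_add, integral_cosExt_sq] at h
    simp only [mul_pow, integral_const_mul, h]
    ring
  have hcross : ∫ y in II, -(π / 2) * sinExt y * (-(5 * π / 2) * (cosExt y ^ 4 * sinExt y)) =
      π ^ 2 / 4 * (5 / 16) := by
    have h := integral_cosExt_pow_mul_sinExt_sq 4
    simp only [Nat.reduceAdd, integral_cosExt_pow_six] at h
    calc _ = ∫ y in II, 5 * π ^ 2 / 4 * (cosExt y ^ 4 * sinExt y ^ 2) := by congr! 2; ring
      _ = _ := by rw [integral_const_mul, h]; push_cast; ring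
  have hcos_sin_sq : ∫ y in II, (-(5 * π / 2) * (cosExt y ^ 4 * sinExt y)) ^ 2 =
      π ^ 2 / 4 * (175 / 256) := by
    have h := integral_cosExt_pow_mul_sinExt_sq 8
    simp only [Nat.reduceAdd, integral_cosExt_pow_ten] at h
    calc _ = ∫ y in II, 25 * π ^ 2 / 4 * (cosExt y ^ 8 * sinExt y ^ 2) := by congr! 2; ring
      _ = _ := by rw [integral_const_mul, h]; push_cast; ring
  simp only [fderiv_trial_snd]
  rw [integral_square_mul_sub_mul_sq hcos hdcos hcos5 hdcos5, hsin_sq, hcross, hcos_sin_sq]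
  simp only [← pow_succ', ← pow_mul, Nat.reduceAdd, Nat.reduceMul, integral_cosExt_sq,
    integral_cosExt_pow_six, integral_cosExt_pow_ten]
  ring

theorem integral_square_gradSq2_trial :
    ∫ p in II ×ˢ II, gradSq2 trial p = 14609 / 65536 * (π ^ 2 / 2) := by
  rw [setIntegral_gradSq2_prod_self contDiff_trial isBounded_II, trial_comp_swap,
    integral_square_fderiv_trial_snd_sq]
  ring

theorem integral_GamR_zero_trial_sq_pos : 0 < ∫ p in GamR 0, trial p ^ 2 := by
  rw [GamR_zero, integral_square_trial_sq]
  norm_num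

theorem integral_GamR_zero_gradSq2_trial_lt :
    ∫ p in GamR 0, gradSq2 trial p < π ^ 2 * ∫ p in GamR 0, trial p ^ 2 := by
  rw [GamR_zero, integral_square_gradSq2_trial, integral_square_trial_sq]
  nlinarith [sq_pos_of_pos pi_pos]

end Trial

/-! ### Energy estimates for admissible functions -/

section Admissible

variable {R r x : ℝ} {u : ℝ × ℝ → ℝ}

theorem AdmR.comp_swap (hu : AdmR R u) : AdmR R (u ∘ Prod.swap) :=
  ⟨hu.1.comp (ContinuousLinearEquiv.prodComm ℝ ℝ ℝ).contDiff,
    fun p hp => hu.2 p.swap (swap_mem_DirB hp)⟩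

theorem AdmR.apply_neg_one_eq_zero (hu : AdmR R u) (hR : 0 < R) (hx : x ∈ Ioo (-1) R) :
    u (x, -1) = 0 :=
  hu.2 _ (mk_mem_DirB hR hx (by simp) fun hG => (hG.1.trans_le (min_le_right _ _)).false)

theorem AdmR.apply_zero_eq_zero (hu : AdmR R u) (hx : x ∈ Ico 0 R) : u (x, 0) = 0 :=
  hu.2 _ (mk_mem_DirB (hx.1.trans_lt hx.2) ⟨by linarith [hx.1], hx.2⟩ (by simp)
    fun hG => (hG.2.trans_le (le_min hx.1 le_rfl)).false)

theorem mul_setIntegral_prod_II_le_of_slices {κ : ℝ} {s : Set ℝ} (hu : ContDiff ℝ 1 u)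
    (hs : MeasurableSet s) (hsb : Bornology.IsBounded s)
    (hslice : ∀ x ∈ s, κ * ∫ y in (-1)..0, u (x, y) ^ 2 ≤
      ∫ y in (-1)..0, fderiv ℝ u (x, y) (0, 1) ^ 2) :
    κ * ∫ p in s ×ˢ II, u p ^ 2 ≤ ∫ p in s ×ˢ II, fderiv ℝ u p (0, 1) ^ 2 := by
  have hbdd : Bornology.IsBounded (s ×ˢ II) := hsb.prod isBounded_II
  rw [← integral_const_mul]
  refine setIntegral_prod_mono_of_slices hs
    (integrableOn_of_isBounded ((hu.continuous.pow 2).const_mul κ) hbdd)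
    (integrableOn_of_isBounded (continuous_fderiv_sq hu _) hbdd) fun x hx => ?_
  simpa only [intervalIntegral_neg_one_zero, integral_const_mul] using hslice x hx

theorem AdmR.pi_sq_mul_setIntegral_arm_le (hu : AdmR R u) (hr : 0 ≤ r) :
    π ^ 2 * ∫ p in Ico r R ×ˢ II, u p ^ 2 ≤ ∫ p in Ico r R ×ˢ II, gradSq2 u p := by
  have hbdd : Bornology.IsBounded (Ico r R ×ˢ II) :=
    (Metric.isBounded_Ico _ _).prod isBounded_II
  calc π ^ 2 * ∫ p in Ico r R ×ˢ II, u p ^ 2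
      ≤ ∫ p in Ico r R ×ˢ II, fderiv ℝ u p (0, 1) ^ 2 := by
        refine mul_setIntegral_prod_II_le_of_slices hu.1 measurableSet_Ico
          (Metric.isBounded_Ico _ _) fun x hx => ?_
        have hx0 : 0 ≤ x := hr.trans hx.1
        have h := poincare_of_endpoints_eq_zero (by norm_num : (-1 : ℝ) < 0)
          (fun y _ => hasDerivAt_comp_prodMk_right (hu.1.differentiable one_ne_zero (x, y)))
          (((hu.1.continuous_fderiv one_ne_zero).clm_apply continuous_const).comp
            (Continuous.prodMk_right x)).continuousOn
          (hu.apply_neg_one_eq_zero (hx0.trans_lt hx.2) ⟨by linarith, hx.2⟩)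
          (hu.apply_zero_eq_zero ⟨hx0, hx.2⟩)
        simpa using h
    _ ≤ ∫ p in Ico r R ×ˢ II, gradSq2 u p :=
        setIntegral_mono (integrableOn_of_isBounded (continuous_fderiv_sq hu.1 _) hbdd)
          (integrableOn_of_isBounded (continuous_gradSq2 hu.1) hbdd)
          fun p => le_add_of_nonneg_left (sq_nonneg _)

theorem AdmR.pi_sq_mul_setIntegral_arms_le (hu : AdmR R u) (hr : 0 ≤ r) :
    π ^ 2 * ((∫ p in Ico r R ×ˢ II, u p ^ 2) + ∫ p in II ×ˢ Ico r R, u p ^ 2) ≤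
      (∫ p in Ico r R ×ˢ II, gradSq2 u p) + ∫ p in II ×ˢ Ico r R, gradSq2 u p := by
  have hswap := hu.comp_swap.pi_sq_mul_setIntegral_arm_le hr
  simp only [gradSq2_comp_swap, Function.comp_apply] at hswap
  rw [setIntegral_volume_prod_swap (fun p => u p ^ 2),
    setIntegral_volume_prod_swap (gradSq2 u)] at hswap
  linarith [hu.pi_sq_mul_setIntegral_arm_le hr]

theorem AdmR.quarter_pi_sq_mul_setIntegral_square_le (hu : AdmR R u) (hR : 0 < R) :
    π ^ 2 / 4 * ∫ p in II ×ˢ II, u p ^ 2 ≤ ∫ p in II ×ˢ II, fderiv ℝ u p (0, 1) ^ 2 := by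
  refine mul_setIntegral_prod_II_le_of_slices hu.1 measurableSet_II
    isBounded_II fun x hx => ?_
  have h := poincare_of_left_eq_zero (by norm_num : (-1 : ℝ) < 0)
    (fun y _ => hasDerivAt_comp_prodMk_right (hu.1.differentiable one_ne_zero (x, y)))
    (((hu.1.continuous_fderiv one_ne_zero).clm_apply continuous_const).comp
      (Continuous.prodMk_right x)).continuousOn
    (hu.apply_neg_one_eq_zero hR ⟨hx.1, hx.2.trans hR⟩)
  calc _ = (π / (2 * (0 - -1))) ^ 2 * ∫ y in (-1)..0, u (x, y) ^ 2 := by ring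
    _ ≤ _ := h

theorem AdmR.half_pi_sq_mul_setIntegral_square_le (hu : AdmR R u) (hR : 0 < R) :
    π ^ 2 / 2 * ∫ p in II ×ˢ II, u p ^ 2 ≤ ∫ p in II ×ˢ II, gradSq2 u p := by
  have hswap := hu.comp_swap.quarter_pi_sq_mul_setIntegral_square_le hR
  simp only [Function.comp_apply] at hswap
  rw [setIntegral_volume_prod_swap (fun p => u p ^ 2)] at hswap
  rw [setIntegral_gradSq2_prod_self hu.1 isBounded_II]
  linarith [hu.quarter_pi_sq_mul_setIntegral_square_le hR]

theorem AdmR.half_pi_sq_mul_le (hu : AdmR R u) (hR : 0 < R) :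
    π ^ 2 / 2 * ∫ p in GamR R, u p ^ 2 ≤ ∫ p in GamR R, gradSq2 u p := by
  have harms := hu.pi_sq_mul_setIntegral_arms_le le_rfl
  have hsquare := hu.half_pi_sq_mul_setIntegral_square_le hR
  have hsq : Continuous fun p => u p ^ 2 := hu.1.continuous.pow 2
  have hnonneg (s : Set (ℝ × ℝ)) : 0 ≤ ∫ p in s, u p ^ 2 := integral_nonneg fun p => sq_nonneg _
  rw [setIntegral_GamR_eq_add_arms hsq le_rfl hR.le,
    setIntegral_GamR_eq_add_arms (continuous_gradSq2 hu.1) le_rfl hR.le, GamR_zero]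
  nlinarith [sq_nonneg π, hnonneg (Ico 0 R ×ˢ II), hnonneg (II ×ˢ Ico 0 R)]

theorem AdmR.mono {R' : ℝ} (hu : AdmR R' u) (h : R ≤ R') : AdmR R u :=
  ⟨hu.1, fun p hp => hu.2 p (DirB_mono h hp)⟩

end Admissible

/-! ### The first Rayleigh quotient -/

section Rayleigh

variable {R R' c : ℝ} {u : ℝ × ℝ → ℝ}

theorem lamR_mul_le (hu : AdmR R u) :
    lamR R * ∫ p in GamR R, u p ^ 2 ≤ ∫ p in GamR R, gradSq2 u p := by
  have hE (v : ℝ × ℝ → ℝ) : 0 ≤ ∫ p in GamR R, gradSq2 v p := integral_nonneg (gradSq2_nonneg v)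
  have hN (v : ℝ × ℝ → ℝ) : 0 ≤ ∫ p in GamR R, v p ^ 2 := integral_nonneg fun p => sq_nonneg _
  rcases (hN u).eq_or_lt' with hzero | hpos
  · rw [hzero, mul_zero]
    exact hE u
  · refine (le_div_iff₀ hpos).1 (csInf_le ⟨0, ?_⟩ ⟨u, hu, hpos.ne', rfl⟩)
    rintro _ ⟨v, -, -, rfl⟩
    exact div_nonneg (hE v) (hN v)

theorem integral_GamR_trial_sq_pos (hR : 0 < R) : 0 < ∫ p in GamR R, trial p ^ 2 :=
  integral_GamR_zero_trial_sq_pos.trans_le <| setIntegral_mono_set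
    (integrableOn_of_isBounded (contDiff_trial.continuous.pow 2) (isBounded_GamR R))
    (ae_of_all _ fun _ => sq_nonneg _) (GamR_mono hR.le).eventuallyLE

theorem le_lamR (hR : 0 < R)
    (h : ∀ u, AdmR R u → c * ∫ p in GamR R, u p ^ 2 ≤ ∫ p in GamR R, gradSq2 u p) :
    c ≤ lamR R := by
  -- The trial function rules out the junk value `sInf ∅ = 0`.
  refine le_csInf ⟨_, trial, admR_trial R, (integral_GamR_trial_sq_pos hR).ne', rfl⟩ ?_
  rintro _ ⟨u, hu, hne, rfl⟩
  exact (le_div_iff₀ ((integral_nonneg fun p => sq_nonneg _).lt_of_ne' hne)).2 (h u hu)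

theorem min_lamR_pi_sq_le (hR : 0 < R) (h : R ≤ R') : min (lamR R) (π ^ 2) ≤ lamR R' := by
  refine le_lamR (hR.trans_le h) fun u hu => ?_
  have hguide := lamR_mul_le (hu.mono h)
  have harms := hu.pi_sq_mul_setIntegral_arms_le hR.le
  have hsq : Continuous fun p => u p ^ 2 := hu.1.continuous.pow 2
  have hnonneg (s : Set (ℝ × ℝ)) : 0 ≤ ∫ p in s, u p ^ 2 := integral_nonneg fun p => sq_nonneg _
  rw [setIntegral_GamR_eq_add_arms hsq hR.le h,
    setIntegral_GamR_eq_add_arms (continuous_gradSq2 hu.1) hR.le h, mul_add]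
  gcongr ?_ + ?_
  · exact (mul_le_mul_of_nonneg_right (min_le_left _ _) (hnonneg _)).trans hguide
  · exact (mul_le_mul_of_nonneg_right (min_le_right _ _)
      (add_nonneg (hnonneg _) (hnonneg _))).trans harms

theorem monotoneOn_lamR_of_lt_pi_sq (h : lamR R < π ^ 2) : MonotoneOn lamR (Ioc 0 R) := by
  intro r hr r' _ hrr'
  have hlt : lamR r < π ^ 2 := by
    by_contra! hge
    exact h.not_ge ((min_eq_right hge).ge.trans (min_lamR_pi_sq_le hr.1 hr.2))
  exact (min_eq_left hlt.le).ge.trans (min_lamR_pi_sq_le hr.1 hrr')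

theorem exists_lamR_lt_pi_sq : ∃ R > 0, lamR R < π ^ 2 := by
  have hE := tendsto_setIntegral_GamR (continuous_gradSq2 contDiff_trial)
  have hN := (tendsto_setIntegral_GamR (contDiff_trial.continuous.pow 2)).const_mul (π ^ 2)
  obtain ⟨R, hlt, hR⟩ :=
    ((hE.eventually_lt hN integral_GamR_zero_gradSq2_trial_lt).and self_mem_nhdsWithin).exists
  exact ⟨R, hR, lt_of_mul_lt_mul_right ((lamR_mul_le (admR_trial R)).trans_lt hlt)
    (integral_GamR_trial_sq_pos hR).le⟩

end Rayleigh

/-- Lemma 3.6 iii: for every `R > 0`, `λ₁(Γ_R) ≥ π²/2`;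
consequently the right limit `λ(0₊) = lim_{R→0⁺} λ₁(Γ_R)` exists and is `≥ π²/2`. -/
theorem lamR_ge_half_pi_sq :
    (∀ R : ℝ, 0 < R → π ^ 2 / 2 ≤ lamR R) ∧
    ∃ l : ℝ, Filter.Tendsto lamR (nhdsWithin 0 (Set.Ioi 0)) (nhds l) ∧ π ^ 2 / 2 ≤ l := by
  have hlow : ∀ R : ℝ, 0 < R → π ^ 2 / 2 ≤ lamR R := fun R hR =>
    le_lamR hR fun u hu => hu.half_pi_sq_mul_le hR
  obtain ⟨R, hR, hlt⟩ := exists_lamR_lt_pi_sq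
  have hmono : MonotoneOn lamR (Ioo 0 R) :=
    (monotoneOn_lamR_of_lt_pi_sq hlt).mono Ioo_subset_Ioc_self
  have hlim := hmono.tendsto_nhdsWithin_Ioo_right (nonempty_Ioo.2 hR)
    ⟨π ^ 2 / 2, forall_mem_image.2 fun r hr => hlow r hr.1⟩
  exact ⟨hlow, _, hlim, ge_of_tendsto hlim (eventually_of_mem self_mem_nhdsWithin hlow)⟩
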